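/- arXiv:2107.09389 — 2 statements merged into one kernel-verified Lean document; each statement's English description precedes it below -/
import Mathlib

section
/- The kernel of d is the internal direct sum of the image of d and the 2-dimensional k-subspace spanned by 1 and ξ₁: ker d = im d ⊕ span_k{1, ξ₁}. Moreover ξ₁² lies in the image of d. (Consequently the homology H_*(R) = ker d / im d is the exterior algebra Λ(ξ₁) on the class of ξ₁.) -/
/-!
`R` is the cobar construction computing `Ext` over `k[x]`, and the theorem follows from an explicit
contracting homotopy. Let `h` be the linear map with `h(ξ₁ ξ_j w) = ξ_{j+1} w` that vanishes on `1`,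
on `ξ₁`, and on every word starting with `ξ_a`, `a ≥ 2`. In `d(ξ_{j+1} w)` the only word of the
form `ξ₁ ⋯` coming from `d(ξ_{j+1})` is `ξ₁ ξ_j w`, and this makes `dh + hd` the identity on all
words other than `1` and `ξ₁` (`sub_homotopy_mem_span`). Hence a cycle `x` differs from the boundary
`d(h x)` by an element of the span of `1` and `ξ₁`. Together with `d² = 0` (`d_comp_d`) this gives
the sum decomposition of the kernel.

The sum is direct because the algebra map `ρ : R → k[ε]` to the dual numbers with `ξ₁ ↦ ε` and
`ξ_i ↦ 0` for `i ≥ 2` kills all boundaries (`toDual_d`) and is injective on the span of `1`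
and `ξ₁`.
-/

/- `FreeAlgebra k ℕ` models the free algebra `R` on noncommuting generators
`ξ₁, ξ₂, ξ₃, …`; the generator of index `n : ℕ` represents `ξ_{n+1}`. -/

/-- The element `d(ξ_{n+1}) = Σ_{j+k=n+1, j,k ≥ 1} ξ_j ξ_k` of the free algebra. -/
noncomputable def dgen (k : Type*) [Field k] (n : ℕ) : FreeAlgebra k ℕ :=
  ∑ a ∈ Finset.range n, FreeAlgebra.ι k a * FreeAlgebra.ι k (n - 1 - a)

/-- The basis word `ξ_{i₁+1} ⋯ ξ_{i_m+1}` corresponding to a list `[i₁, …, i_m]`. -/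
noncomputable def word (k : Type*) [Field k] (w : List ℕ) : FreeAlgebra k ℕ :=
  (w.map (FreeAlgebra.ι k)).prod

/-- The prescribed value of the differential on a basis word. -/
noncomputable def dWord (k : Type*) [Field k] : List ℕ → FreeAlgebra k ℕ
  | [] => 0
  | i :: w => dgen k i * word k w - FreeAlgebra.ι k i * dWord k w

lemma basisFreeMonoid_eq_word (k : Type*) [Field k] (w : FreeMonoid ℕ) :
    FreeAlgebra.basisFreeMonoid k ℕ w = word k w.toList := by
  simp [FreeAlgebra.basisFreeMonoid, FreeAlgebra.equivMonoidAlgebraFreeMonoid, word,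
    FreeMonoid.lift_apply]

/-- Words span the free algebra, so linear maps agreeing on words are equal. -/
lemma word_ext {k : Type*} [Field k] {M : Type*} [AddCommGroup M] [Module k M]
    {f g : FreeAlgebra k ℕ →ₗ[k] M} (hfg : ∀ w, f (word k w) = g (word k w)) : f = g :=
  (FreeAlgebra.basisFreeMonoid k ℕ).ext fun w => by
    rw [basisFreeMonoid_eq_word]; exact hfg _

lemma word_nil (k : Type*) [Field k] : word k [] = 1 := by simp [word]

lemma word_cons (k : Type*) [Field k] (i : ℕ) (w : List ℕ) :
    word k (i :: w) = FreeAlgebra.ι k i * word k w := by simp [word]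

/-- The contracting homotopy on words: `ξ₁ ξ_j w ↦ ξ_{j+1} w`, and all other words go to `0`. -/
noncomputable def hWord (k : Type*) [Field k] : List ℕ → FreeAlgebra k ℕ
  | 0 :: j :: w => word k ((j + 1) :: w)
  | _ => 0

/-- The contracting homotopy `h`, the linear extension of `hWord`. -/
noncomputable def homotopy (k : Type*) [Field k] : FreeAlgebra k ℕ →ₗ[k] FreeAlgebra k ℕ :=
  (FreeAlgebra.basisFreeMonoid k ℕ).constr k fun w => hWord k w.toList

lemma homotopy_word (k : Type*) [Field k] (w : List ℕ) :
    homotopy k (word k w) = hWord k w := by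
  have := (FreeAlgebra.basisFreeMonoid k ℕ).constr_basis k
    (fun w => hWord k w.toList) (FreeMonoid.ofList w)
  rwa [basisFreeMonoid_eq_word] at this

lemma homotopy_zero_mul (k : Type*) [Field k] (j : ℕ) (x : FreeAlgebra k ℕ) :
    homotopy k (FreeAlgebra.ι k 0 * (FreeAlgebra.ι k j * x)) = FreeAlgebra.ι k (j + 1) * x := by
  have : homotopy k ∘ₗ LinearMap.mulLeft k (FreeAlgebra.ι k 0) ∘ₗ
      LinearMap.mulLeft k (FreeAlgebra.ι k j) = LinearMap.mulLeft k (FreeAlgebra.ι k (j + 1)) :=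
    word_ext fun w => by
      simp only [LinearMap.comp_apply, LinearMap.mulLeft_apply, ← word_cons, homotopy_word, hWord]
  exact LinearMap.congr_fun this x

lemma homotopy_succ_mul (k : Type*) [Field k] (a : ℕ) (x : FreeAlgebra k ℕ) :
    homotopy k (FreeAlgebra.ι k (a + 1) * x) = 0 := by
  have : homotopy k ∘ₗ LinearMap.mulLeft k (FreeAlgebra.ι k (a + 1)) = 0 :=
    word_ext fun w => by
      simp only [LinearMap.comp_apply, LinearMap.mulLeft_apply, ← word_cons, homotopy_word, hWord,
        LinearMap.zero_apply]
  exact LinearMap.congr_fun this x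

/-- Among the terms `ξ_b ξ_c` of `d(ξ_{a+2})`, only `ξ₁ ξ_{a+1}` survives under `h`. -/
lemma homotopy_dgen_mul (k : Type*) [Field k] (a : ℕ) (x : FreeAlgebra k ℕ) :
    homotopy k (dgen k (a + 1) * x) = FreeAlgebra.ι k (a + 1) * x := by
  simp only [dgen, Finset.sum_range_succ', add_mul, Finset.sum_mul, map_add, map_sum, mul_assoc,
    homotopy_succ_mul, Finset.sum_const_zero, zero_add, homotopy_zero_mul]
  simp

lemma homotopy_zero_mul_dgen_mul (k : Type*) [Field k] (j : ℕ) (x : FreeAlgebra k ℕ) :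
    homotopy k (FreeAlgebra.ι k 0 * (dgen k j * x)) =
      (dgen k (j + 1) - FreeAlgebra.ι k 0 * FreeAlgebra.ι k j) * x := by
  have e : dgen k (j + 1) - FreeAlgebra.ι k 0 * FreeAlgebra.ι k j =
      ∑ a ∈ Finset.range j, FreeAlgebra.ι k (a + 1) * FreeAlgebra.ι k (j - 1 - a) := by
    rw [dgen, Finset.sum_range_succ']
    simp only [Nat.add_sub_cancel, Nat.sub_zero, add_sub_cancel_right]
    refine Finset.sum_congr rfl fun a _ => ?_
    rw [Nat.sub_sub, Nat.add_comm 1 a]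
  rw [e]
  simp only [dgen, Finset.sum_mul, Finset.mul_sum, map_sum, mul_assoc, homotopy_zero_mul]

section Differential

variable {k : Type*} [Field k] {d : FreeAlgebra k ℕ →ₗ[k] FreeAlgebra k ℕ}

/-- The signed Leibniz rule for multiplication by a generator. -/
lemma d_ι_mul (hd : ∀ w : List ℕ, d (word k w) = dWord k w) (i : ℕ) (x : FreeAlgebra k ℕ) :
    d (FreeAlgebra.ι k i * x) = dgen k i * x - FreeAlgebra.ι k i * d x := by
  have : d ∘ₗ LinearMap.mulLeft k (FreeAlgebra.ι k i) =
      LinearMap.mulLeft k (dgen k i) - LinearMap.mulLeft k (FreeAlgebra.ι k i) ∘ₗ d :=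
    word_ext fun w => by
      simp only [LinearMap.comp_apply, LinearMap.mulLeft_apply, LinearMap.sub_apply, ← word_cons,
        hd, dWord]
  exact LinearMap.congr_fun this x

/-- `d(d(ξ_{n+1})) = 0`: coassociativity of the splitting of an index into two parts. -/
lemma dgen_coassoc (k : Type*) [Field k] (n : ℕ) :
    ∑ a ∈ Finset.range n, dgen k a * FreeAlgebra.ι k (n - 1 - a) =
      ∑ a ∈ Finset.range n, FreeAlgebra.ι k a * dgen k (n - 1 - a) := by
  simp only [dgen, Finset.sum_mul, Finset.mul_sum]
  rw [Finset.sum_sigma', Finset.sum_sigma']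
  refine Finset.sum_bij' (fun p _ => ⟨p.2, p.1 - 1 - p.2⟩) (fun p _ => ⟨p.1 + p.2 + 1, p.1⟩)
    ?_ ?_ ?_ ?_ ?_
  · rintro ⟨a, c⟩ h
    simp only [Finset.mem_sigma, Finset.mem_range] at h ⊢
    omega
  · rintro ⟨a, c⟩ h
    simp only [Finset.mem_sigma, Finset.mem_range] at h ⊢
    omega
  · rintro ⟨a, c⟩ h
    simp only [Finset.mem_sigma, Finset.mem_range] at h
    have : c + (a - 1 - c) + 1 = a := by omega
    simp [this]
  · rintro ⟨a, c⟩ h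
    simp
  · rintro ⟨a, c⟩ h
    simp only [Finset.mem_sigma, Finset.mem_range] at h
    have : n - 1 - c - 1 - (a - 1 - c) = n - 1 - a := by omega
    simp only [this, mul_assoc]

lemma d_dgen_mul (hd : ∀ w : List ℕ, d (word k w) = dWord k w) (n : ℕ) (x : FreeAlgebra k ℕ) :
    d (dgen k n * x) = dgen k n * d x := by
  have h := congrArg (· * x) (dgen_coassoc k n)
  simp only [Finset.sum_mul] at h
  rw [dgen]
  simp only [Finset.sum_mul, map_sum, mul_assoc, d_ι_mul hd, mul_sub, Finset.sum_sub_distrib]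
  simp only [mul_assoc] at h
  rw [h]
  abel

lemma d_one (hd : ∀ w : List ℕ, d (word k w) = dWord k w) : d 1 = 0 := by
  rw [← word_nil, hd, dWord]

lemma d_comp_d (hd : ∀ w : List ℕ, d (word k w) = dWord k w) (x : FreeAlgebra k ℕ) :
    d (d x) = 0 := by
  have : d ∘ₗ d = 0 := word_ext fun w => by
    simp only [LinearMap.comp_apply, LinearMap.zero_apply]
    induction w with
    | nil => rw [word_nil, d_one hd, map_zero]
    | cons i w ih =>
      rw [word_cons, d_ι_mul hd, map_sub, d_dgen_mul hd, d_ι_mul hd, ih]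
      simp
  exact LinearMap.congr_fun this x

/-- `1 - dh - hd` takes values in the span of `1` and `ξ₁`. -/
lemma sub_homotopy_mem_span (hd : ∀ w : List ℕ, d (word k w) = dWord k w) (x : FreeAlgebra k ℕ) :
    x - d (homotopy k x) - homotopy k (d x) ∈
      Submodule.span k {(1 : FreeAlgebra k ℕ), FreeAlgebra.ι k 0} := by
  set S := Submodule.span k {(1 : FreeAlgebra k ℕ), FreeAlgebra.ι k 0}
  have key : S.mkQ ∘ₗ (LinearMap.id - d ∘ₗ homotopy k - homotopy k ∘ₗ d) = 0 :=
    word_ext fun w => by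
      simp only [LinearMap.comp_apply, LinearMap.sub_apply, LinearMap.id_apply,
        LinearMap.zero_apply, Submodule.mkQ_apply, Submodule.Quotient.mk_eq_zero]
      match w with
      | [] =>
        rw [homotopy_word, hWord, hd, dWord, map_zero, map_zero, sub_zero, sub_zero, word_nil]
        · exact Submodule.subset_span (by simp)
        · simp
      | [0] =>
        have h1 : d (word k [0]) = 0 := by simp [hd, dWord, dgen]
        rw [h1, homotopy_word, hWord, map_zero, map_zero, sub_zero, sub_zero, word_cons, word_nil,
          mul_one]
        · exact Submodule.subset_span (by simp)
        · simp
      | 0 :: j :: w =>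
        have h0 : dgen k 0 = 0 := by simp [dgen]
        simp only [word_cons, homotopy_zero_mul, d_ι_mul hd, h0, zero_mul, zero_sub, mul_sub,
          map_sub, map_neg, homotopy_zero_mul_dgen_mul, sub_mul, mul_assoc]
        convert S.zero_mem using 1
        abel
      | (a + 1) :: w =>
        simp only [word_cons, homotopy_succ_mul, d_ι_mul hd, map_sub, homotopy_dgen_mul, map_zero,
          sub_zero, sub_self, S.zero_mem]
  have := LinearMap.congr_fun key x
  simpa only [LinearMap.comp_apply, LinearMap.sub_apply, LinearMap.id_apply,
    LinearMap.zero_apply, Submodule.mkQ_apply, Submodule.Quotient.mk_eq_zero] using this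

/-- The algebra map `ρ : R → k[ε]` with `ξ₁ ↦ ε` and `ξ_i ↦ 0` for `i ≥ 2`. -/
noncomputable def toDual (k : Type*) [Field k] : FreeAlgebra k ℕ →ₐ[k] DualNumber k :=
  FreeAlgebra.lift k fun i => if i = 0 then DualNumber.eps else 0

lemma toDual_dgen (k : Type*) [Field k] (n : ℕ) : toDual k (dgen k n) = 0 := by
  rw [dgen, map_sum]
  refine Finset.sum_eq_zero fun a _ => ?_
  simp only [toDual, map_mul, FreeAlgebra.lift_ι_apply]
  split_ifs <;> simp

lemma toDual_d (hd : ∀ w : List ℕ, d (word k w) = dWord k w) (x : FreeAlgebra k ℕ) :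
    toDual k (d x) = 0 := by
  have : (toDual k).toLinearMap ∘ₗ d = 0 := word_ext fun w => by
    simp only [LinearMap.comp_apply, LinearMap.zero_apply, AlgHom.toLinearMap_apply]
    induction w with
    | nil => rw [word_nil, d_one hd, map_zero]
    | cons i w ih =>
      rw [word_cons, d_ι_mul hd, map_sub, map_mul, map_mul, ih, toDual_dgen]
      simp
  exact LinearMap.congr_fun this x

end Differential

/-- `ker d = im d ⊕ span{1, ξ₁}` (internal direct sum), and
`ξ₁² ∈ im d`; hence `H_*(R) = Λ(ξ₁)`. -/
theorem ker_eq_range_sup_span (k : Type*) [Field k]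
    (d : FreeAlgebra k ℕ →ₗ[k] FreeAlgebra k ℕ)
    (hd : ∀ w : List ℕ, d (word k w) = dWord k w) :
    LinearMap.ker d =
      LinearMap.range d ⊔ Submodule.span k {(1 : FreeAlgebra k ℕ), FreeAlgebra.ι k 0} ∧
    Disjoint (LinearMap.range d)
      (Submodule.span k {(1 : FreeAlgebra k ℕ), FreeAlgebra.ι k 0}) ∧
    (FreeAlgebra.ι k 0) ^ 2 ∈ LinearMap.range d := by
  have dι (i : ℕ) : d (FreeAlgebra.ι k i) = dgen k i := by
    simpa [d_one hd] using d_ι_mul hd i 1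
  refine ⟨le_antisymm ?_ (sup_le ?_ ?_), ?_, ?_⟩
  · intro x hx
    have h := sub_homotopy_mem_span hd x
    rw [LinearMap.mem_ker.1 hx, map_zero, sub_zero] at h
    exact Submodule.mem_sup.2 ⟨_, LinearMap.mem_range_self d (homotopy k x), _, h, by abel⟩
  · rintro _ ⟨x, rfl⟩
    exact d_comp_d hd x
  · rw [Submodule.span_le]
    rintro x (rfl | rfl)
    · exact d_one hd
    · simp [dι, dgen]
  · rw [Submodule.disjoint_def]
    rintro _ ⟨x, rfl⟩ hx
    obtain ⟨a, b, hab⟩ := Submodule.mem_span_pair.1 hx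
    have h := toDual_d hd x
    rw [← hab] at h
    -- The two components of `ρ(a + b ξ₁) = a + b ε` are `a` and `b`.
    have ha := congrArg TrivSqZeroExt.fst h
    have hb := congrArg TrivSqZeroExt.snd h
    simp [toDual] at ha hb
    rw [← hab, ha, hb]
    simp
  · exact ⟨FreeAlgebra.ι k 1, by rw [dι]; simp [dgen, sq]⟩
end

section
/- Suppose 1 ≤ i ≤ j. There is a unique S-linear map α : I_i → I_j with α(t) = 0 and α(x^i) = t, and multiplication by x^{j−i} defines an S-linear map β : I_i → I_j (β(t) = t x^{j−i}, β(x^i) = x^j). The S-module map S² → Hom_S(I_i, I_j) sending (s₁, s₂) to s₁α + s₂β is surjective, and its kernel is the S-submodule of S² generated by (t, 0) and (x^j, −t). (Thus Hom_S(I_i, I_j) is generated by α and β subject exactly to the relations tα = 0 and x^j α = t β.) -/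
/-! Every element of `I_m` is `a t + b xᵐ`, so a map out of `I_m` is determined by its values at `t` and
`xᵐ`. Everything else comes from two facts about `S`: the annihilator of `t` is `(t)`
(`tS_dvd_of_mul_eq_zero`) and `x` is a nonzerodivisor (`eq_zero_of_xS_pow_mul`); the first holds
because `k[x, t]` is a domain, the second because `X 1` is a prime which does not divide `X 0`. The map `α` is obtained by dividing `t m` by `xⁱ`.

For surjectivity, let `f : I_i → I_j` and write
`f(xⁱ) = a t + b xʲ`. From `t f(xⁱ) = xⁱ f(t)` and cancellation of `xⁱ` one gets
`f(t) = b x^{j-i} t`, whence `f = a α + b β`. For the kernel, evaluate `s₁ α + s₂ β = 0` at `t` and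
`xⁱ`: the first gives `s₂ = t u`, and then the second gives `s₁ + u xʲ ∈ (t)`. -/

set_option synthInstance.maxHeartbeats 1000000
set_option maxHeartbeats 1000000

/-- The ring `S = k[x, t]/(t²)`, with `x = X 0` and `t = X 1`. -/
abbrev Sring (k : Type*) [Field k] : Type _ :=
  MvPolynomial (Fin 2) k ⧸
    (Ideal.span {(MvPolynomial.X 1 : MvPolynomial (Fin 2) k) ^ 2})

/-- The element `x` of `S`. -/
noncomputable def xS (k : Type*) [Field k] : Sring k :=
  Ideal.Quotient.mk _ (MvPolynomial.X 0)

/-- The element `t` of `S`. -/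
noncomputable def tS (k : Type*) [Field k] : Sring k :=
  Ideal.Quotient.mk _ (MvPolynomial.X 1)

/-- The ideal `I_m = (t, xᵐ)` of `S`, regarded as an `S`-module. -/
noncomputable abbrev Imod (k : Type*) [Field k] (m : ℕ) : Submodule (Sring k) (Sring k) :=
  Ideal.span {tS k, xS k ^ m}

/-- The element `t` of `I_m`. -/
noncomputable def tEl (k : Type*) [Field k] (m : ℕ) : Imod k m :=
  ⟨tS k, Submodule.subset_span (Set.mem_insert _ _)⟩

/-- The element `xᵐ` of `I_m`. -/
noncomputable def xEl (k : Type*) [Field k] (m : ℕ) : Imod k m :=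
  ⟨xS k ^ m, Submodule.subset_span (Set.mem_insert_of_mem _ rfl)⟩

theorem tS_mul_tS (k : Type*) [Field k] : tS k * tS k = 0 := by
  rw [tS, ← map_mul, Ideal.Quotient.eq_zero_iff_mem, ← pow_two]
  exact Ideal.mem_span_singleton_self _

/-- The annihilator of `t` is `(t)`. -/
theorem tS_dvd_of_mul_eq_zero {k : Type*} [Field k] {a : Sring k} (h : tS k * a = 0) :
    tS k ∣ a := by
  obtain ⟨A, rfl⟩ := Ideal.Quotient.mk_surjective a
  rw [tS, ← map_mul, Ideal.Quotient.eq_zero_iff_mem, Ideal.mem_span_singleton, pow_two] at h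
  exact map_dvd _ ((mul_dvd_mul_iff_left (MvPolynomial.X_ne_zero 1)).1 h)

/-- Powers of `x` are nonzerodivisors. -/
theorem eq_zero_of_xS_pow_mul {k : Type*} [Field k] {n : ℕ} {a : Sring k}
    (h : xS k ^ n * a = 0) : a = 0 := by
  obtain ⟨A, rfl⟩ := Ideal.Quotient.mk_surjective a
  rw [xS, ← map_pow, ← map_mul, Ideal.Quotient.eq_zero_iff_mem, Ideal.mem_span_singleton] at h
  rw [Ideal.Quotient.eq_zero_iff_mem, Ideal.mem_span_singleton]
  have hp : Prime (MvPolynomial.X 1 : MvPolynomial (Fin 2) k) := MvPolynomial.X_prime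
  refine hp.pow_dvd_of_dvd_mul_left 2 (fun hd => ?_) h
  have := hp.dvd_of_dvd_pow hd
  rw [MvPolynomial.X_dvd_X] at this
  simp at this

theorem xS_pow_mul_cancel {k : Type*} [Field k] {n : ℕ} {a b : Sring k}
    (h : xS k ^ n * a = xS k ^ n * b) : a = b :=
  sub_eq_zero.1 (eq_zero_of_xS_pow_mul (n := n) (by rw [mul_sub, h, sub_self]))

theorem exists_eq_of_mem_Imod {k : Type*} [Field k] {m : ℕ} {z : Sring k} (hz : z ∈ Imod k m) :
    ∃ a b : Sring k, z = a * tS k + b * xS k ^ m := by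
  obtain ⟨a, b, h⟩ := Ideal.mem_span_pair.1 hz
  exact ⟨a, b, h.symm⟩

/-- Linear maps out of `I_m` are determined by their values at `t` and `xᵐ`. -/
theorem Imod_hom_ext {k : Type*} [Field k] {i j : ℕ} {f g : Imod k i →ₗ[Sring k] Imod k j}
    (ht : (f (tEl k i) : Sring k) = g (tEl k i)) (hx : (f (xEl k i) : Sring k) = g (xEl k i)) :
    f = g := by
  refine LinearMap.ext fun m => ?_
  obtain ⟨a, b, hab⟩ := exists_eq_of_mem_Imod m.2
  have hm : m = a • tEl k i + b • xEl k i := Subtype.ext hab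
  rw [hm, map_add, map_add, map_smul, map_smul, map_smul, map_smul, Subtype.ext ht, Subtype.ext hx]

/-- The map `α`: since `t I_i ⊆ xⁱ I_j` and `xⁱ` is a nonzerodivisor, `α(m)` can be taken to be the
unique element with `xⁱ α(m) = t m`. -/
theorem exists_alpha (k : Type*) [Field k] (i j : ℕ) :
    ∃ α : Imod k i →ₗ[Sring k] Imod k j, ∀ m, xS k ^ i * (α m : Sring k) = tS k * (m : Sring k) := by
  have key : ∀ m : Imod k i, ∃ z : Imod k j, xS k ^ i * (z : Sring k) = tS k * (m : Sring k) := by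
    intro m
    obtain ⟨a, b, hab⟩ := exists_eq_of_mem_Imod m.2
    refine ⟨b • tEl k j, ?_⟩
    change xS k ^ i * (b * tS k) = _
    rw [hab]
    linear_combination -a * tS_mul_tS k
  choose f hf using key
  refine ⟨{ toFun := f, map_add' := fun m n => ?_, map_smul' := fun r m => ?_ }, hf⟩
  · refine Subtype.ext (xS_pow_mul_cancel (n := i) ?_)
    change _ = xS k ^ i * ((f m : Sring k) + (f n : Sring k))
    rw [mul_add, hf, hf, hf]
    exact mul_add _ _ _
  · refine Subtype.ext (xS_pow_mul_cancel (n := i) ?_)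
    change _ = xS k ^ i * (r * (f m : Sring k))
    rw [mul_left_comm, hf, hf]
    exact mul_left_comm _ _ _

/-- `1 ≤ i ≤ j`: there is a unique `S`-linear `α : I_i → I_j` with
`α(t) = 0`, `α(xⁱ) = t`; with `β : I_i → I_j` multiplication by `x^{j−i}`, the
`S`-module map `S² → Hom_S(I_i, I_j)`, `(s₁, s₂) ↦ s₁α + s₂β`, is surjective
with kernel generated by `(t, 0)` and `(xʲ, −t)`. -/
theorem hom_Ii_Ij_le (k : Type*) [Field k] (i j : ℕ) (hi : 1 ≤ i) (hij : i ≤ j) :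
    (∃! α : Imod k i →ₗ[Sring k] Imod k j,
      (α (tEl k i) : Sring k) = 0 ∧ (α (xEl k i) : Sring k) = tS k) ∧
    (∀ (α β : Imod k i →ₗ[Sring k] Imod k j)
      (Φ : Sring k × Sring k →ₗ[Sring k] (Imod k i →ₗ[Sring k] Imod k j)),
      ((α (tEl k i) : Sring k) = 0 ∧ (α (xEl k i) : Sring k) = tS k) →
      (∀ m : Imod k i, (β m : Sring k) = xS k ^ (j - i) * (m : Sring k)) →
      (∀ s₁ s₂ : Sring k, Φ (s₁, s₂) = s₁ • α + s₂ • β) →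
      Function.Surjective Φ ∧
      LinearMap.ker Φ =
        Submodule.span (Sring k) {(tS k, 0), (xS k ^ j, -tS k)}) := by
  constructor
  · obtain ⟨α, hα⟩ := exists_alpha k i j
    have h1 : (α (tEl k i) : Sring k) = 0 :=
      eq_zero_of_xS_pow_mul ((hα _).trans (tS_mul_tS k))
    have h2 : (α (xEl k i) : Sring k) = tS k :=
      xS_pow_mul_cancel ((hα _).trans (mul_comm _ _))
    exact ⟨α, ⟨h1, h2⟩, fun g hg => Imod_hom_ext (hg.1.trans h1.symm) (hg.2.trans h2.symm)⟩
  · rintro α β Φ ⟨hαt, hαx⟩ hβ hΦ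
    have hpow : xS k ^ (j - i) * xS k ^ i = xS k ^ j := by rw [← pow_add, Nat.sub_add_cancel hij]
    have htt := tS_mul_tS k
    have hβt : (β (tEl k i) : Sring k) = xS k ^ (j - i) * tS k := hβ _
    have hβx : (β (xEl k i) : Sring k) = xS k ^ j := (hβ _).trans hpow
    have hΦt : ∀ s₁ s₂, (Φ (s₁, s₂) (tEl k i) : Sring k) = s₂ * (xS k ^ (j - i) * tS k) := by
      intro s₁ s₂
      rw [hΦ]
      change s₁ * (α (tEl k i) : Sring k) + s₂ * (β (tEl k i) : Sring k) = _
      rw [hαt, hβt, mul_zero, zero_add]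
    have hΦx : ∀ s₁ s₂, (Φ (s₁, s₂) (xEl k i) : Sring k) = s₁ * tS k + s₂ * xS k ^ j := by
      intro s₁ s₂
      rw [hΦ]
      change s₁ * (α (xEl k i) : Sring k) + s₂ * (β (xEl k i) : Sring k) = _
      rw [hαx, hβx]
    constructor
    · intro f
      -- Linearity of `f` applied to the relation `t · xⁱ = xⁱ · t` in `I_i`.
      have h2 : tS k * (f (xEl k i) : Sring k) = xS k ^ i * (f (tEl k i) : Sring k) := by
        have h0 : tS k • xEl k i = xS k ^ i • tEl k i := Subtype.ext (mul_comm _ _)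
        have h := congrArg f h0
        rw [map_smul, map_smul] at h
        exact congrArg Subtype.val h
      obtain ⟨a, b, hab⟩ := exists_eq_of_mem_Imod (f (xEl k i)).2
      refine ⟨(a, b), Imod_hom_ext ?_ ?_⟩
      · rw [hΦt]
        refine xS_pow_mul_cancel (n := i) ?_
        rw [← h2, hab]
        linear_combination b * tS k * hpow - a * htt
      · rw [hΦx, hab]
    · apply le_antisymm
      · rintro ⟨s₁, s₂⟩ hs
        rw [LinearMap.mem_ker] at hs
        have e1 := hΦt s₁ s₂
        have e2 := hΦx s₁ s₂
        rw [hs] at e1 e2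
        change (0 : Sring k) = _ at e1
        change (0 : Sring k) = _ at e2
        have h3 : tS k * s₂ = 0 :=
          eq_zero_of_xS_pow_mul (n := j - i) (by linear_combination -e1)
        obtain ⟨u, rfl⟩ := tS_dvd_of_mul_eq_zero h3
        have h4 : tS k * (s₁ + u * xS k ^ j) = 0 := by linear_combination -e2
        obtain ⟨v, hv⟩ := tS_dvd_of_mul_eq_zero h4
        refine Submodule.mem_span_pair.2 ⟨v, -u, Prod.ext ?_ ?_⟩
        · change v * tS k + -u * xS k ^ j = s₁
          linear_combination -hv
        · change v * 0 + -u * -tS k = tS k * u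
          ring
      · rw [Submodule.span_le]
        rintro _ (rfl | rfl)
        · refine LinearMap.mem_ker.2 (Imod_hom_ext ?_ ?_)
          · rw [hΦt]
            exact zero_mul _
          · rw [hΦx]
            change _ = (0 : Sring k)
            linear_combination htt
        · refine LinearMap.mem_ker.2 (Imod_hom_ext ?_ ?_)
          · rw [hΦt]
            change _ = (0 : Sring k)
            linear_combination -xS k ^ (j - i) * htt
          · rw [hΦx]
            change _ = (0 : Sring k)
            ring
end
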